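/- arXiv:1411.7666 — 2 statements merged into one kernel-verified Lean document; each statement's English description precedes it below -/
import Mathlib

section
/- If S is a nontrivial subspace of V(Q_{n,m}), then every coloring of the induced subgraph Q_{n,m}|_S contains a code of dimension at most ⌈(dim(S^⊥)+1)/m⌉. -/
open Matrix

/-- The tropical, cyclical, commutative quantum graph `Q_{n,m}`: its edge space is spanned
by the identity together with `m` commuting positive self-adjoint operators `A i` with a
common orthonormal eigenbasis; for each `i`, `w i` lists the eigenvectors of `A i` in
decreasing order of eigenvalue `lam i`, the eigenvalues are tropically separated
(`0 < λ_{i,j+1} < λ_{i,j}/n²`), consecutive labelings are cyclic shifts by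
`⌊n/m⌋ (+1 for the first n mod m indices)`, and `ws` is the single-index relabeling in
which `w_{(k−1)m+1},…,w_{km}` each equal `w_{i,k}` for some `i`. -/
structure Qnm (n m : ℕ) where
  A : Fin m → Matrix (Fin n) (Fin n) ℂ
  herm : ∀ i, (A i).IsHermitian
  comm : ∀ i j, A i * A j = A j * A i
  lam : Fin m → Fin n → ℝ
  w : Fin m → Fin n → (Fin n → ℂ)
  ws : Fin n → (Fin n → ℂ)
  ortho : ∀ i j k, star (w i j) ⬝ᵥ w i k = if j = k then 1 else 0
  span : ∀ i, Submodule.span ℂ (Set.range (w i)) = ⊤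
  eig : ∀ i j, (A i).mulVec (w i j) = (lam i j : ℂ) • w i j
  pos : ∀ i j, 0 < lam i j
  tropical : ∀ i (j : Fin n) (h : (j : ℕ) + 1 < n),
    lam i ⟨(j : ℕ) + 1, h⟩ < lam i j / (n : ℝ) ^ 2
  cyclical : ∀ (i : Fin m) (hi : (i : ℕ) + 1 < m) (j : Fin n),
    w ⟨(i : ℕ) + 1, hi⟩ j =
      w i ⟨((j : ℕ) + n / m + if (i : ℕ) + 1 ≤ n % m then 1 else 0) % n,
        Nat.mod_lt _ (Nat.lt_of_le_of_lt (Nat.zero_le _) j.isLt)⟩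
  relabel : ∀ t : Fin n, ∃ i : Fin m,
    ws t = w i ⟨(t : ℕ) / m, Nat.lt_of_le_of_lt (Nat.div_le_self _ _) t.isLt⟩
  wsortho : ∀ s t, star (ws s) ⬝ᵥ ws t = if s = t then 1 else 0
  wsspan : Submodule.span ℂ (Set.range ws) = ⊤

/-- A code of `Q_{n,m}`: an (orthogonal projection onto a) subspace `C` with
`P_C A P_C = ε_C(A) P_C` for every edge operator `A` (equivalently, for the identity
and each basis operator `A i`). -/
def Qnm.IsCode {n m : ℕ} (Q : Qnm n m) (P : Matrix (Fin n) (Fin n) ℂ) : Prop :=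
  P.IsHermitian ∧ P * P = P ∧ ∀ i, ∃ ε : ℝ, P * Q.A i * P = (ε : ℂ) • P

section OrthonormalFamilies

variable {ι : Type*} [Fintype ι] [DecidableEq ι]

theorem dotProduct_family_expansion {e : ι → ι → ℂ}
    (he : ∀ j k, star (e j) ⬝ᵥ e k = if j = k then 1 else 0) (v : ι → ℂ) :
    ∑ j, (star (e j) ⬝ᵥ v) • e j = v := by
  have h1 : (Matrix.of e)ᵀᴴ * (Matrix.of e)ᵀ = 1 := by
    ext j k
    simpa [Matrix.mul_apply, Matrix.one_apply, dotProduct] using he j k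
  have h2 := mul_eq_one_comm.mp h1
  calc ∑ j, (star (e j) ⬝ᵥ v) • e j = (Matrix.of e)ᵀ *ᵥ ((Matrix.of e)ᵀᴴ *ᵥ v) := by
        ext a
        simp [Matrix.mulVec, dotProduct, mul_comm]
    _ = v := by rw [Matrix.mulVec_mulVec, h2, Matrix.one_mulVec]

theorem trace_eq_sum_dotProduct_mulVec {e : ι → ι → ℂ}
    (he : ∀ j k, star (e j) ⬝ᵥ e k = if j = k then 1 else 0) (M : Matrix ι ι ℂ) :
    M.trace = ∑ j, star (e j) ⬝ᵥ M *ᵥ e j := by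
  have h1 : (Matrix.of e)ᵀᴴ * (Matrix.of e)ᵀ = 1 := by
    ext j k
    simpa [Matrix.mul_apply, Matrix.one_apply, dotProduct] using he j k
  have h2 := mul_eq_one_comm.mp h1
  calc M.trace = ((Matrix.of e)ᵀᴴ * (M * (Matrix.of e)ᵀ)).trace := by
        rw [Matrix.trace_mul_comm, Matrix.mul_assoc, h2, Matrix.mul_one]
    _ = ∑ j, star (e j) ⬝ᵥ M *ᵥ e j := by
        simp [Matrix.trace, Matrix.mul_apply, Matrix.mulVec, dotProduct]

theorem rayleigh_eq_sum_eigenvalues {e : ι → ι → ℂ}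
    (he : ∀ j k, star (e j) ⬝ᵥ e k = if j = k then 1 else 0) {A : Matrix ι ι ℂ} {μ : ι → ℝ}
    (hA : ∀ j, A *ᵥ e j = (μ j : ℂ) • e j) (v : ι → ℂ) :
    (star v ⬝ᵥ A *ᵥ v).re = ∑ j, μ j * Complex.normSq (star (e j) ⬝ᵥ v) := by
  have h : A *ᵥ v = ∑ j, (star (e j) ⬝ᵥ v) • (μ j : ℂ) • e j := by
    conv_lhs => rw [← dotProduct_family_expansion he v]
    rw [Matrix.mulVec_sum]
    simp [Matrix.mulVec_smul, hA]
  rw [h, dotProduct_sum, Complex.re_sum]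
  refine Finset.sum_congr rfl fun j _ => ?_
  have h3 : star v ⬝ᵥ e j = star (star (e j) ⬝ᵥ v) := by
    rw [Matrix.star_dotProduct]
  rw [dotProduct_smul, dotProduct_smul, h3]
  generalize star (e j) ⬝ᵥ v = z
  simp [Complex.normSq_apply]
  ring

theorem rayleigh_le_of_orthogonal {e : ι → ι → ℂ}
    (he : ∀ j k, star (e j) ⬝ᵥ e k = if j = k then 1 else 0) {A : Matrix ι ι ℂ} {μ : ι → ℝ}
    (hA : ∀ j, A *ᵥ e j = (μ j : ℂ) • e j) {v : ι → ℂ} {c : ℝ}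
    (hv : ∀ j, star (e j) ⬝ᵥ v = 0 ∨ μ j ≤ c) :
    (star v ⬝ᵥ A *ᵥ v).re ≤ c * (star v ⬝ᵥ v).re := by
  have h1 := rayleigh_eq_sum_eigenvalues he (A := 1) (μ := fun _ => 1) (by simp) v
  rw [Matrix.one_mulVec] at h1
  rw [rayleigh_eq_sum_eigenvalues he hA, h1, Finset.mul_sum]
  refine Finset.sum_le_sum fun j _ => ?_
  rcases hv j with h | h
  · simp [h]
  · rw [one_mul]
    exact mul_le_mul_of_nonneg_right h (Complex.normSq_nonneg _)

end OrthonormalFamilies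

section Projections

variable {ι : Type*} [Fintype ι]

theorem dotProduct_star_self_re_pos {v : ι → ℂ} (hv : v ≠ 0) : 0 < (star v ⬝ᵥ v).re := by
  open ComplexOrder in
  exact (Complex.pos_iff.mp (Matrix.dotProduct_star_self_pos_iff.mpr hv)).1

theorem trace_eq_rank_of_mul_self [DecidableEq ι] {P : Matrix ι ι ℂ} (h : P * P = P) :
    P.trace = (P.rank : ℂ) := by
  have hi : IsIdempotentElem (Matrix.toLin' P) := by
    rw [IsIdempotentElem, Module.End.mul_eq_comp, ← Matrix.toLin'_mul, h]
  have := (LinearMap.IsIdempotentElem.isProj_range _ hi).trace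
  rw [Matrix.trace_toLin'_eq] at this
  rw [this]
  rfl

theorem projection_quadratic_nonneg {P : Matrix ι ι ℂ} (hP : P.IsHermitian) (h : P * P = P)
    (v : ι → ℂ) : 0 ≤ (star v ⬝ᵥ P *ᵥ v).re := by
  open ComplexOrder in
  have h1 := (Matrix.posSemidef_conjTranspose_mul_self P).dotProduct_mulVec_nonneg v
  rw [hP.eq, h] at h1
  exact (Complex.nonneg_iff.mp h1).1

theorem projection_quadratic_le [DecidableEq ι] {P : Matrix ι ι ℂ} (hP : P.IsHermitian)
    (h : P * P = P) (v : ι → ℂ) : (star v ⬝ᵥ P *ᵥ v).re ≤ (star v ⬝ᵥ v).re := by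
  have h1 := projection_quadratic_nonneg (P := 1 - P) (Matrix.isHermitian_one.sub hP)
    (by simp [mul_sub, sub_mul, h]) v
  rw [Matrix.sub_mulVec, dotProduct_sub, Matrix.one_mulVec, Complex.sub_re] at h1
  linarith

theorem exists_fixed_orthogonal {P : Matrix ι ι ℂ} (h : P * P = P) {c : ℕ} (hc : c < P.rank)
    (f : Fin c → ι → ℂ) :
    ∃ v : ι → ℂ, v ≠ 0 ∧ P *ᵥ v = v ∧ ∀ k, star (f k) ⬝ᵥ v = 0 := by
  let g : LinearMap.range P.mulVecLin →ₗ[ℂ] (Fin c → ℂ) :=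
    (Matrix.of fun k => star (f k)).mulVecLin ∘ₗ (LinearMap.range P.mulVecLin).subtype
  have hg : LinearMap.ker g ≠ ⊥ := LinearMap.ker_ne_bot_of_finrank_lt (by
    rw [Module.finrank_fin_fun]
    exact hc)
  obtain ⟨⟨v, u, rfl⟩, hvk, hv0⟩ := (Submodule.ne_bot_iff _).mp hg
  refine ⟨P.mulVecLin u, fun h0 => hv0 (Subtype.ext h0), ?_, fun k => congrFun hvk k⟩
  rw [Matrix.mulVecLin_apply, Matrix.mulVec_mulVec, h]

/-- One half of Cauchy interlacing for a scalar compression: if a projection of rank exceeding `c`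
compresses `A` to the scalar `ε`, then `ε` is at most the `c`-th eigenvalue (counted from zero). -/
theorem compression_le_eigenvalue {n : ℕ} {e : Fin n → Fin n → ℂ}
    (he : ∀ j k, star (e j) ⬝ᵥ e k = if j = k then 1 else 0)
    {A : Matrix (Fin n) (Fin n) ℂ} {μ : Fin n → ℝ} (hμ : Antitone μ)
    (hA : ∀ j, A *ᵥ e j = (μ j : ℂ) • e j) {P : Matrix (Fin n) (Fin n) ℂ}
    (hP : P.IsHermitian) (h : P * P = P) (c : Fin n) (hc : (c : ℕ) < P.rank) {ε : ℝ}
    (hε : P * A * P = (ε : ℂ) • P) : ε ≤ μ c := by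
  obtain ⟨v, hv0, hPv, hv⟩ := exists_fixed_orthogonal h hc (fun k => e ⟨k, k.2.trans c.2⟩)
  have h1 : (star v ⬝ᵥ A *ᵥ v).re ≤ μ c * (star v ⬝ᵥ v).re := by
    refine rayleigh_le_of_orthogonal he hA fun j => ?_
    rcases lt_or_ge j c with hj | hj
    · exact Or.inl (hv ⟨j, hj⟩)
    · exact Or.inr (hμ hj)
  have hvP : star v ᵥ* P = star v := by
    conv_rhs => rw [← hPv]
    rw [Matrix.star_mulVec, hP.eq]
  have h2 : star v ⬝ᵥ A *ᵥ v = (ε : ℂ) * (star v ⬝ᵥ v) := by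
    calc star v ⬝ᵥ A *ᵥ v = star v ⬝ᵥ (P * A * P) *ᵥ v := by
          rw [← Matrix.mulVec_mulVec, hPv, ← Matrix.mulVec_mulVec, Matrix.dotProduct_mulVec _ P,
            hvP]
      _ = (ε : ℂ) * (star v ⬝ᵥ v) := by
          rw [hε, Matrix.smul_mulVec, hPv, dotProduct_smul, smul_eq_mul]
  rw [h2, Complex.re_ofReal_mul] at h1
  exact le_of_mul_le_mul_right h1 (dotProduct_star_self_re_pos hv0)

end Projections

theorem Qnm.lam_antitone {n m : ℕ} (Q : Qnm n m) (i : Fin m) : Antitone (Q.lam i) := by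
  rcases n with _ | n
  · exact fun a => a.elim0
  refine Fin.antitone_iff_succ_le.mpr fun j => ?_
  refine (Q.tropical i j.castSucc (by simp)).le.trans ?_
  exact div_le_self (Q.pos _ _).le (one_le_pow₀ (by simp))

/-- If `S` is a nontrivial subspace of `V(Q_{n,m})` (given by its orthogonal projection
`PS ≠ 0`), then every coloring of the induced subgraph `Q_{n,m}|_S` (a finite set of codes
of the induced graph whose projections sum to the identity `PS` of `S`) contains a code of
dimension at most `⌈(dim S^⊥ + 1)/m⌉ = ((n - dim S) + 1 + m - 1)/m`. -/
theorem coloring_of_induced_has_small_code {n m : ℕ} (hn : 1 ≤ n) (hm : 1 ≤ m)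
    (Q : Qnm n m) (PS : Matrix (Fin n) (Fin n) ℂ)
    (hPSherm : PS.IsHermitian) (hPSproj : PS * PS = PS) (hPSne : PS ≠ 0)
    (K : Finset (Matrix (Fin n) (Fin n) ℂ))
    (hK : ∀ P ∈ K, P.IsHermitian ∧ P * P = P ∧ P * PS = P ∧ PS * P = P ∧
      ∀ i, ∃ ε : ℝ, P * (PS * Q.A i * PS) * P = (ε : ℂ) • P)
    (hsum : ∑ P ∈ K, P = PS) :
    ∃ P ∈ K, P.rank ≤ (n - PS.rank + 1 + m - 1) / m := by
  by_contra! hbig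
  set c := (n - PS.rank + 1 + m - 1) / m with hcdef
  have hrn : PS.rank ≤ n := by simpa using PS.rank_le_height
  have hcm : n - PS.rank + 1 ≤ c * m := by
    have := Nat.lt_div_mul_add (a := n - PS.rank + 1 + m - 1) (b := m) (by omega)
    rw [← hcdef] at this
    omega
  have hKne : K.Nonempty := by
    rw [Finset.nonempty_iff_ne_empty]
    rintro rfl
    exact hPSne (by simpa using hsum.symm)
  have hcn : c < n := by
    obtain ⟨P, hP⟩ := hKne
    have : P.rank ≤ n := by simpa using P.rank_le_height
    exact (hbig P hP).trans_le this
  have hrpos : 0 < PS.rank := by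
    refine Nat.pos_of_ne_zero fun h0 => hPSne ?_
    rw [Matrix.rank, Submodule.finrank_eq_zero, LinearMap.range_eq_bot] at h0
    exact Matrix.ext_of_mulVec_single fun j =>
      (LinearMap.congr_fun h0 (Pi.single j 1)).trans (Matrix.zero_mulVec _).symm
  have hn0 : (0 : ℝ) < n := by exact_mod_cast hn
  have hranks : ∑ P ∈ K, (P.rank : ℝ) = PS.rank := by
    have h1 : PS.trace = ∑ P ∈ K, P.trace := by rw [← hsum, Matrix.trace_sum]
    rw [trace_eq_rank_of_mul_self hPSproj,
      Finset.sum_congr rfl fun P hP => trace_eq_rank_of_mul_self (hK P hP).2.1] at h1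
    exact_mod_cast h1.symm
  have htrace : ∀ i, (PS * Q.A i).trace.re ≤ n * Q.lam i ⟨c, hcn⟩ := by
    intro i
    have h1 : ∀ P ∈ K, (P * Q.A i).trace.re ≤ P.rank * Q.lam i ⟨c, hcn⟩ := by
      intro P hP
      obtain ⟨hPh, hPP, hPS, hSP, hε⟩ := hK P hP
      obtain ⟨ε, hε⟩ := hε i
      have hcomp : P * Q.A i * P = (ε : ℂ) • P := by
        rw [← hε]
        calc P * Q.A i * P = (P * PS) * Q.A i * (PS * P) := by rw [hPS, hSP]
          _ = P * (PS * Q.A i * PS) * P := by simp only [Matrix.mul_assoc]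
      have hle := compression_le_eigenvalue (Q.ortho i) (Q.lam_antitone i) (Q.eig i) hPh hPP
        ⟨c, hcn⟩ (hbig P hP) hcomp
      have ht : (P * Q.A i).trace = (ε : ℂ) * P.rank := by
        rw [← trace_eq_rank_of_mul_self hPP, ← smul_eq_mul (ε : ℂ), ← Matrix.trace_smul, ← hcomp,
          Matrix.trace_mul_comm (P * Q.A i) P, ← Matrix.mul_assoc, hPP]
      rw [ht, Complex.re_ofReal_mul, Complex.natCast_re, mul_comm]
      exact mul_le_mul_of_nonneg_left hle (Nat.cast_nonneg _)
    calc (PS * Q.A i).trace.re = ∑ P ∈ K, (P * Q.A i).trace.re := by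
          rw [← hsum, Finset.sum_mul, Matrix.trace_sum, Complex.re_sum]
      _ ≤ ∑ P ∈ K, P.rank * Q.lam i ⟨c, hcn⟩ := Finset.sum_le_sum h1
      _ = PS.rank * Q.lam i ⟨c, hcn⟩ := by rw [← Finset.sum_mul, hranks]
      _ ≤ n * Q.lam i ⟨c, hcn⟩ :=
          mul_le_mul_of_nonneg_right (by exact_mod_cast hrn) (Q.pos _ _).le
  have hsmall : ∀ i (j : Fin n), (j : ℕ) < c →
      (star (Q.w i j) ⬝ᵥ PS *ᵥ Q.w i j).re < 1 / n := by
    intro i j hj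
    have hexp : (PS * Q.A i).trace.re
        = ∑ k, Q.lam i k * (star (Q.w i k) ⬝ᵥ PS *ᵥ Q.w i k).re := by
      rw [trace_eq_sum_dotProduct_mulVec (Q.ortho i), Complex.re_sum]
      refine Finset.sum_congr rfl fun k _ => ?_
      rw [← Matrix.mulVec_mulVec, Q.eig, Matrix.mulVec_smul, dotProduct_smul, smul_eq_mul,
        Complex.re_ofReal_mul]
    have hterm : Q.lam i j * (star (Q.w i j) ⬝ᵥ PS *ᵥ Q.w i j).re ≤ (PS * Q.A i).trace.re := by
      rw [hexp]
      exact Finset.single_le_sum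
        (f := fun k => Q.lam i k * (star (Q.w i k) ⬝ᵥ PS *ᵥ Q.w i k).re)
        (fun k _ => mul_nonneg (Q.pos _ _).le
          (projection_quadratic_nonneg hPSherm hPSproj _)) (Finset.mem_univ j)
    have hgap : Q.lam i ⟨c, hcn⟩ < Q.lam i j / (n : ℝ) ^ 2 := by
      have hjn : (j : ℕ) + 1 < n := by omega
      exact (Q.lam_antitone i (show (⟨j + 1, hjn⟩ : Fin n) ≤ ⟨c, hcn⟩ from hj)).trans_lt
        (Q.tropical i j hjn)
    have hlt : Q.lam i j * (star (Q.w i j) ⬝ᵥ PS *ᵥ Q.w i j).re < Q.lam i j * (1 / n) := by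
      calc _ ≤ n * Q.lam i ⟨c, hcn⟩ := hterm.trans (htrace i)
        _ < n * (Q.lam i j / (n : ℝ) ^ 2) := mul_lt_mul_of_pos_left hgap hn0
        _ = Q.lam i j * (1 / n) := by field_simp
    exact lt_of_mul_lt_mul_left hlt (Q.pos i j).le
  have hbound : ∀ t : Fin n, (star (Q.ws t) ⬝ᵥ PS *ᵥ Q.ws t).re ≤ 1 := by
    intro t
    refine (projection_quadratic_le hPSherm hPSproj _).trans ?_
    simp [Q.wsortho]
  have hbound' : ∀ t : Fin n, (t : ℕ) < n - PS.rank + 1 →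
      (star (Q.ws t) ⬝ᵥ PS *ᵥ Q.ws t).re < 1 / n := by
    intro t ht
    obtain ⟨i, hi⟩ := Q.relabel t
    rw [hi]
    exact hsmall i _ (Nat.div_lt_of_lt_mul (by rw [mul_comm]; omega))
  have htot : (PS.rank : ℝ) = ∑ t, (star (Q.ws t) ⬝ᵥ PS *ᵥ Q.ws t).re := by
    rw [← Complex.re_sum, ← trace_eq_sum_dotProduct_mulVec Q.wsortho,
      trace_eq_rank_of_mul_self hPSproj, Complex.natCast_re]
  have hlt : ∑ t, (star (Q.ws t) ⬝ᵥ PS *ᵥ Q.ws t).re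
      < ∑ t : Fin n, if (t : ℕ) < n - PS.rank + 1 then 1 / (n : ℝ) else 1 := by
    refine Finset.sum_lt_sum (fun t _ => ?_) ⟨⟨0, hn⟩, Finset.mem_univ _, ?_⟩
    · split_ifs with h
      · exact (hbound' t h).le
      · exact hbound t
    · rw [if_pos (Nat.succ_pos _)]
      exact hbound' _ (Nat.succ_pos _)
  have hcount : (∑ t : Fin n, if (t : ℕ) < n - PS.rank + 1 then 1 / (n : ℝ) else 1)
      = (n - PS.rank + 1 : ℕ) * (1 / (n : ℝ)) + (PS.rank - 1 : ℕ) := by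
    obtain ⟨a, ha⟩ : ∃ a, a = n - PS.rank + 1 := ⟨_, rfl⟩
    obtain ⟨b, hb⟩ : ∃ b, b = PS.rank - 1 := ⟨_, rfl⟩
    have hab : n = a + b := by omega
    rw [← ha, ← hb, Fin.sum_univ_eq_sum_range (fun t => if t < a then 1 / (n : ℝ) else 1) n]
    conv_lhs => rw [show Finset.range n = Finset.range (a + b) by rw [hab]]
    rw [Finset.sum_range_add, Finset.sum_congr rfl fun t ht => if_pos (Finset.mem_range.mp ht)]
    simp
  rw [← htot, hcount] at hlt
  have hle1 : ((n - PS.rank + 1 : ℕ) : ℝ) * (1 / n) ≤ 1 := by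
    rw [mul_one_div, div_le_one hn0]
    exact_mod_cast (by omega : n - PS.rank + 1 ≤ n)
  have hpred : ((PS.rank - 1 : ℕ) : ℝ) = PS.rank - 1 := by
    rw [Nat.cast_sub hrpos, Nat.cast_one]
  linarith
end

section
/- Every quantum graph G admits a coloring of cardinality at most slog(|G|, (‖G‖+1)²), where |G| = dim V(G) and ‖G‖ = dim E(G) − 1. -/
open Matrix

structure QuantumGraph (n : ℕ) where
  E : Submodule ℝ (Matrix (Fin n) (Fin n) ℂ)
  herm : ∀ A ∈ E, A.IsHermitian
  one_mem : (1 : Matrix (Fin n) (Fin n) ℂ) ∈ E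

def IsCodeProj {n : ℕ} (G : QuantumGraph n) (P : Matrix (Fin n) (Fin n) ℂ)
    (ε : Matrix (Fin n) (Fin n) ℂ → ℝ) : Prop :=
  P.IsHermitian ∧ P * P = P ∧ ∀ A ∈ G.E, P * A * P = (ε A : ℂ) • P

def slog (q : ℕ) : ℕ → ℕ
  | 0 => 0
  | p + 1 => slog q (p + 1 - max 1 ((p + 1 + q - 1) / q)) + 1
decreasing_by
  exact Nat.sub_lt (Nat.succ_pos p) (lt_of_lt_of_le Nat.zero_lt_one (le_max_left _ _))

/-- A coloring of a quantum graph: a finite set of (projections onto) codes summing to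
the identity. -/
def IsColoring {n : ℕ} (G : QuantumGraph n) (K : Finset (Matrix (Fin n) (Fin n) ℂ)) :
    Prop :=
  (∀ P ∈ K, ∃ ε, IsCodeProj G P ε) ∧ ∑ P ∈ K, P = 1

theorem sq_norm_le_inner_of_forall_norm_le {F : Type*} [NormedAddCommGroup F]
    [InnerProductSpace ℝ F] {y z : F}
    (h : ∀ t : ℝ, 0 < t → t ≤ 1 → ‖z‖ ≤ ‖z + t • (y - z)‖) : ‖z‖ ^ 2 ≤ inner ℝ y z := by
  by_contra! hlt
  have hyz : inner ℝ z (y - z) < 0 := by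
    rw [inner_sub_right, real_inner_self_eq_norm_sq, real_inner_comm]
    linarith
  set a := inner ℝ z (y - z)
  set d := ‖y - z‖ ^ 2
  have hd : 0 ≤ d := sq_nonneg _
  obtain ⟨t, ht0, ht1, ht⟩ : ∃ t : ℝ, 0 < t ∧ t ≤ 1 ∧ t * d < -2 * a := by
    refine ⟨min 1 (-a / (d + 1)), lt_min one_pos (div_pos (by linarith) (by linarith)),
      min_le_left _ _, ?_⟩
    have h1 : min 1 (-a / (d + 1)) * d ≤ -a / (d + 1) * (d + 1) := by
      gcongr
      · exact div_nonneg (by linarith) (by linarith)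
      · exact min_le_right _ _
      · linarith
    rw [div_mul_cancel₀ _ (by linarith)] at h1
    linarith
  have h2 := pow_le_pow_left₀ (norm_nonneg _) (h t ht0 ht1) 2
  rw [norm_add_sq_real, inner_smul_right, norm_smul, mul_pow, Real.norm_eq_abs, sq_abs] at h2
  change _ ≤ _ + 2 * (t * a) + t ^ 2 * d at h2
  nlinarith

/-- If `Σ w i • x i` is a convex combination of linearly dependent points, all lying on a
hyperplane off the origin, then one of the weights can be made to vanish. -/
theorem exists_stdSimplex_apply_eq_zero {ι F : Type*} [Fintype ι] [AddCommGroup F] [Module ℝ F]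
    {x : ι → F} (hx : ¬ LinearIndependent ℝ x) (φ : F →ₗ[ℝ] ℝ) {a : ℝ} (ha : a ≠ 0)
    (hφ : ∀ i, φ (x i) = a) {w : ι → ℝ} (hw : w ∈ stdSimplex ℝ ι) :
    ∃ w' ∈ stdSimplex ℝ ι, ∑ i, w' i • x i = ∑ i, w i • x i ∧ ∃ i, w' i = 0 := by
  obtain ⟨g, hg, i₁, hi₁⟩ := Fintype.not_linearIndependent_iff.1 hx
  have hsum : ∑ i, g i = 0 := by
    have := congrArg φ hg
    simp only [map_sum, map_smul, hφ, smul_eq_mul, map_zero, ← Finset.sum_mul] at this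
    exact (mul_eq_zero.1 this).resolve_right ha
  obtain ⟨i₂, -, hi₂⟩ := Finset.exists_pos_of_sum_zero_of_exists_nonzero g hsum
    ⟨i₁, Finset.mem_univ _, hi₁⟩
  obtain ⟨i₀, hi₀, hmin⟩ := (Finset.univ.filter fun i => 0 < g i).exists_min_image
    (fun i => w i / g i) ⟨i₂, by simpa using hi₂⟩
  simp only [Finset.mem_filter, Finset.mem_univ, true_and] at hi₀ hmin
  refine ⟨fun i => w i - w i₀ / g i₀ * g i, ⟨fun i => ?_, ?_⟩, ?_, i₀, ?_⟩
  · rcases lt_or_ge 0 (g i) with h | h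
    · have := hmin i h
      rw [le_div_iff₀ h] at this
      exact sub_nonneg.2 this
    · exact sub_nonneg.2 ((mul_nonpos_of_nonneg_of_nonpos
        (div_nonneg (hw.1 i₀) hi₀.le) h).trans (hw.1 i))
  · rw [Finset.sum_sub_distrib, ← Finset.mul_sum, hsum, hw.2, mul_zero, sub_zero]
  · simp only [sub_smul, mul_smul, Finset.sum_sub_distrib, ← Finset.smul_sum, hg, smul_zero,
      sub_zero]
  · simp [hi₀.ne']

/-- **Colorful Carathéodory theorem**; the hypothesis `h` says that the origin lies in the convex
hull of each color class. -/
theorem colorful_caratheodory {ι α F : Type*} [Fintype ι] [Nonempty ι] [Finite α]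
    [NormedAddCommGroup F] [InnerProductSpace ℝ F] [FiniteDimensional ℝ F]
    (hcard : Module.finrank ℝ F < Fintype.card ι) (f : ι → α → F)
    (h : ∀ i z, ∃ a, inner ℝ (f i a) z ≤ 0) :
    ∃ c : ι → α, ∃ w ∈ stdSimplex ℝ ι, ∑ i, w i • f i (c i) = 0 := by
  classical
  have hne : (stdSimplex ℝ ι).Nonempty := ⟨_, single_mem_stdSimplex ℝ (Classical.arbitrary ι)⟩
  have hmin (c : ι → α) : ∃ w ∈ stdSimplex ℝ ι,
      IsMinOn (fun w : ι → ℝ => ‖∑ i, w i • f i (c i)‖) (stdSimplex ℝ ι) w :=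
    (isCompact_stdSimplex ℝ ι).exists_isMinOn hne (by fun_prop)
  choose W hW hWmin using hmin
  have : Nonempty (ι → α) := ⟨fun i => (h i 0).choose⟩
  obtain ⟨c, hc⟩ := Finite.exists_min fun c : ι → α => ‖∑ i, W c i • f i (c i)‖
  refine ⟨c, W c, hW c, ?_⟩
  by_contra hz
  set z := ∑ i, W c i • f i (c i) with hzdef
  have hzmin (c' : ι → α) (w) (hw : w ∈ stdSimplex ℝ ι) : ‖z‖ ≤ ‖∑ i, w i • f i (c' i)‖ :=
    (hc c').trans (hWmin c' hw)
  have hzpos : 0 < ‖z‖ ^ 2 := by positivity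
  have key (c' : ι → α) (w) (hw : w ∈ stdSimplex ℝ ι) (hwz : ∑ i, w i • f i (c' i) = z) (j : ι) :
      ‖z‖ ^ 2 ≤ inner ℝ (f j (c' j)) z := by
    refine sq_norm_le_inner_of_forall_norm_le fun t ht0 ht1 => ?_
    convert hzmin c' _ ((convex_stdSimplex ℝ ι).add_smul_sub_mem hw
      (single_mem_stdSimplex ℝ j) ⟨ht0.le, ht1⟩) using 2
    simp [add_smul, sub_smul, mul_smul, smul_sub, Finset.sum_add_distrib,
      Finset.sum_sub_distrib, ← Finset.smul_sum, hwz, Pi.single_apply, ite_smul]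
  have key' (w) (hw : w ∈ stdSimplex ℝ ι) (hwz : ∑ i, w i • f i (c i) = z) (j : ι) : w j ≠ 0 := by
    intro hj
    obtain ⟨a, ha⟩ := h j z
    have hupd : ∑ i, w i • f i (Function.update c j a i) = z := by
      rw [← hwz]
      refine Finset.sum_congr rfl fun i _ => ?_
      obtain rfl | hij := eq_or_ne i j
      · simp [hj]
      · simp [hij]
    have := key _ w hw hupd j
    rw [Function.update_self] at this
    linarith
  have hon (j : ι) : inner ℝ (f j (c j)) z = ‖z‖ ^ 2 := by
    have hle := key c _ (hW c) rfl
    have hsum : ∑ i, W c i * (inner ℝ (f i (c i)) z - ‖z‖ ^ 2) = 0 := by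
      simp only [mul_sub, Finset.sum_sub_distrib, ← Finset.sum_mul, (hW c).2, one_mul]
      rw [sub_eq_zero, ← real_inner_self_eq_norm_sq]
      conv_rhs => rw [hzdef, sum_inner]
      simp only [real_inner_smul_left, ← hzdef]
    have := (Finset.sum_eq_zero_iff_of_nonneg fun i _ =>
      mul_nonneg ((hW c).1 i) (sub_nonneg.2 (hle i))).1 hsum j (Finset.mem_univ j)
    exact sub_eq_zero.1 ((mul_eq_zero.1 this).resolve_left (key' _ (hW c) rfl j))
  obtain ⟨w, hw, hwz, i, hi⟩ := exists_stdSimplex_apply_eq_zero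
    (fun hli => hcard.not_ge (hli.fintype_card_le_finrank)) (innerₗ F z) hzpos.ne'
    (fun j => by rw [innerₗ_apply_apply, real_inner_comm, hon]) (hW c)
  exact key' w hw hwz i hi

/-- **Tverberg's theorem** in homogeneous coordinates. -/
theorem tverberg_homogeneous {ι κ α : Type*} [Fintype ι] [Fintype κ] [Fintype α] [DecidableEq α]
    [Nonempty α] (hcard : Fintype.card κ * (Fintype.card α - 1) < Fintype.card ι)
    (b : ι → κ → ℝ) :
    ∃ c : ι → α, ∃ w ∈ stdSimplex ℝ ι, ∀ l a a',
      ∑ i with c i = a, w i * b i l = ∑ i with c i = a', w i * b i l := by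
  have : Nonempty ι := Fintype.card_pos_iff.1 (by omega)
  let a₀ : α := Classical.arbitrary α
  let u (a : α) (s : {a : α // a ≠ a₀}) : ℝ :=
    (if a = s then 1 else 0) - (if a = a₀ then 1 else 0)
  let f (i : ι) (a : α) : EuclideanSpace ℝ (κ × {a : α // a ≠ a₀}) :=
    WithLp.toLp 2 fun p => b i p.1 * u a p.2
  have hu (s) : ∑ a, u a s = 0 := by simp [u]
  have hf (i : ι) : ∑ a, f i a = 0 := by
    ext p
    simp [f, ← Finset.mul_sum, hu]
  obtain ⟨c, w, hw, hz⟩ := colorful_caratheodory (by simpa using hcard) f fun i z => by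
    obtain ⟨a, -, ha⟩ := Finset.exists_le_of_sum_le (s := Finset.univ)
      (f := fun a => inner ℝ (f i a) z) (g := fun _ => 0) Finset.univ_nonempty (by rw [← sum_inner, hf]; simp)
    exact ⟨a, ha⟩
  refine ⟨c, w, hw, ?_⟩
  have key (l a) : ∑ i with c i = a, w i * b i l = ∑ i with c i = a₀, w i * b i l := by
    obtain rfl | ha := eq_or_ne a a₀
    · rfl
    · have := congrArg (fun v => v (l, ⟨a, ha⟩)) hz
      simp [f, u, mul_sub, Finset.sum_sub_distrib] at this
      simpa [Finset.sum_filter, sub_eq_zero] using this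
  exact fun l a a' => (key l a).trans (key l a').symm

/-- The value of a sesquilinear form at given vectors, as a linear function of its matrix. -/
def sesqFormₗ {n : ℕ} (u v : Fin n → ℂ) : Matrix (Fin n) (Fin n) ℂ →ₗ[ℝ] ℂ where
  toFun A := star u ⬝ᵥ A *ᵥ v
  map_add' A B := by rw [add_mulVec, dotProduct_add]
  map_smul' r A := by rw [smul_mulVec, dotProduct_smul, RingHom.id_apply]

theorem sesqFormₗ_apply {n : ℕ} (u v : Fin n → ℂ) (A : Matrix (Fin n) (Fin n) ℂ) :
    sesqFormₗ u v A = star u ⬝ᵥ A *ᵥ v := rfl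

theorem Matrix.IsHermitian.star_sesqFormₗ {n : ℕ} {A : Matrix (Fin n) (Fin n) ℂ}
    (hA : A.IsHermitian) (u v : Fin n → ℂ) : star (sesqFormₗ u v A) = sesqFormₗ v u A := by
  rw [sesqFormₗ_apply, sesqFormₗ_apply, star_dotProduct, star_star, star_mulVec, hA.eq,
    dotProduct_mulVec]

open scoped ComplexOrder in
/-- Every large enough subspace contains a unit vector which no edge operator links to one of
finitely many given vectors. -/
theorem QuantumGraph.exists_unit_orthogonal {n k : ℕ} (G : QuantumGraph n)
    (S : Submodule ℂ (Fin n → ℂ)) (hk : k * Module.finrank ℝ G.E < Module.finrank ℂ S)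
    (v : Fin k → Fin n → ℂ) :
    ∃ x ∈ S, star x ⬝ᵥ x = 1 ∧ ∀ A ∈ G.E, ∀ i, sesqFormₗ (v i) x A = 0 := by
  let b := Module.finBasis ℝ G.E
  let f : S →ₗ[ℂ] (Fin k × Fin (Module.finrank ℝ G.E) → ℂ) :=
    { toFun := fun x p => sesqFormₗ (v p.1) x (b p.2)
      map_add' := fun x y => by
        ext p
        simp [sesqFormₗ_apply, mulVec_add]
      map_smul' := fun r x => by
        ext p
        simp [sesqFormₗ_apply, mulVec_smul] }
  obtain ⟨x, hx, hx0⟩ := Submodule.exists_mem_ne_zero_of_ne_bot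
    (f.ker_ne_bot_of_finrank_lt (by simpa using hk))
  have hx1 (i) (A) (hA : A ∈ G.E) : sesqFormₗ (v i) x A = 0 := by
    have : sesqFormₗ (v i) x ∘ₗ G.E.subtype = 0 :=
      b.ext fun l => congrFun (LinearMap.mem_ker.1 hx) (i, l)
    exact LinearMap.congr_fun this ⟨A, hA⟩
  have hpos : 0 < star (x : Fin n → ℂ) ⬝ᵥ x := 
    dotProduct_star_self_pos_iff.2 fun h => hx0 (Subtype.ext h)
  obtain ⟨t, ht, hxt⟩ : ∃ t : ℝ, 0 < t ∧ star (x : Fin n → ℂ) ⬝ᵥ x = t := by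
    obtain ⟨h1, h2⟩ := Complex.pos_iff.1 hpos
    exact ⟨_, h1, Complex.ext rfl h2.symm⟩
  refine ⟨(((√t)⁻¹ : ℝ) : ℂ) • x, S.smul_mem _ x.2, ?_, fun A hA i => ?_⟩
  · rw [star_smul, smul_dotProduct, dotProduct_smul, hxt]
    simp only [smul_eq_mul, Complex.star_def, Complex.conj_ofReal, ← Complex.ofReal_mul]
    rw [← mul_assoc, ← mul_inv, Real.mul_self_sqrt ht.le, inv_mul_cancel₀ ht.ne', Complex.ofReal_one]
  · rw [sesqFormₗ_apply, mulVec_smul, dotProduct_smul, ← sesqFormₗ_apply, hx1 i A hA, smul_zero]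

/-- A large enough subspace contains `k + 1` orthonormal vectors on which every edge operator
compresses to a diagonal matrix. -/
theorem QuantumGraph.exists_diagonalizing {n : ℕ} (G : QuantumGraph n)
    (S : Submodule ℂ (Fin n → ℂ)) (k : ℕ) (hk : k * Module.finrank ℝ G.E < Module.finrank ℂ S) :
    ∃ v : Fin (k + 1) → Fin n → ℂ, (∀ i, v i ∈ S) ∧ (∀ i, star (v i) ⬝ᵥ v i = 1) ∧
      ∀ A ∈ G.E, ∀ i j, i ≠ j → sesqFormₗ (v i) (v j) A = 0 := by
  induction k with
  | zero =>
    obtain ⟨x, hxS, hx1, -⟩ := G.exists_unit_orthogonal S hk Fin.elim0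
    exact ⟨fun _ => x, fun _ => hxS, fun _ => hx1, fun A _ i j hij =>
      (hij (Subsingleton.elim (α := Fin 1) i j)).elim⟩
  | succ k ih =>
    obtain ⟨v, hvS, hv1, hv⟩ := ih ((Nat.mul_le_mul_right _ k.le_succ).trans_lt hk)
    obtain ⟨x, hxS, hx1, hx⟩ := G.exists_unit_orthogonal S hk v
    refine ⟨Fin.cons x v, Fin.cases hxS hvS, Fin.cases hx1 hv1, fun A hA => ?_⟩
    have hx' (i) : sesqFormₗ x (v i) A = 0 := by
      rw [← (G.herm A hA).star_sesqFormₗ, hx A hA, star_zero]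
    refine Fin.cases (Fin.cases (fun h => (h rfl).elim) fun j _ => hx' j) fun i =>
      Fin.cases (fun _ => hx A hA i) fun j hij => hv A hA i j fun h => hij (h ▸ rfl)

/-- A subspace `S` with `dim S > (r - 1) (dim E)²` contains an `r`-dimensional code, spanned by the
orthonormal columns of `W`. -/
theorem QuantumGraph.exists_code {n : ℕ} (G : QuantumGraph n) (S : Submodule ℂ (Fin n → ℂ)) (m : ℕ)
    (hm : m * Module.finrank ℝ G.E ^ 2 < Module.finrank ℂ S) :
    ∃ (W : Matrix (Fin n) (Fin (m + 1)) ℂ) (ε : Matrix (Fin n) (Fin n) ℂ → ℝ),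
      (∀ j, W.col j ∈ S) ∧ Wᴴ * W = 1 ∧ ∀ A ∈ G.E, Wᴴ * A * W = (ε A : ℂ) • 1 := by
  obtain ⟨v, hvS, hv1, hv⟩ := G.exists_diagonalizing S (m * Module.finrank ℝ G.E)
    (by rwa [mul_assoc, ← sq])
  let b := Module.finBasis ℝ G.E
  obtain ⟨c, w, hw, htv⟩ := tverberg_homogeneous (α := Fin (m + 1))
    (by simp [mul_comm]) fun i l => (sesqFormₗ (v i) (v i) (b l)).re
  have hall (A) (hA : A ∈ G.E) (a) : ∑ i with c i = a, w i * (sesqFormₗ (v i) (v i) A).re =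
      ∑ i with c i = 0, w i * (sesqFormₗ (v i) (v i) A).re := by
    let L (a : Fin (m + 1)) : G.E →ₗ[ℝ] ℝ :=
      ∑ i with c i = a, w i • (Complex.reLm ∘ₗ sesqFormₗ (v i) (v i) ∘ₗ G.E.subtype)
    have : L a = L 0 := b.ext fun l => by simpa [L] using htv l a 0
    simpa [L] using LinearMap.congr_fun this ⟨A, hA⟩
  have hre (A) (hA : A ∈ G.E) (i) :
      sesqFormₗ (v i) (v i) A = ((sesqFormₗ (v i) (v i) A).re : ℂ) :=
    (Complex.conj_eq_iff_re.1 ((G.herm A hA).star_sesqFormₗ _ _)).symm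
  let V : Matrix (Fin n) (Fin (m * Module.finrank ℝ G.E + 1)) ℂ := of fun a i => v i a
  let T : Matrix (Fin (m * Module.finrank ℝ G.E + 1)) (Fin (m + 1)) ℂ :=
    of fun i j => if c i = j then (√((m + 1) * w i) : ℂ) else 0
  have hV (A) (hA : A ∈ G.E) :
      Vᴴ * A * V = diagonal fun i => ((sesqFormₗ (v i) (v i) A).re : ℂ) := by
    ext i j
    have : (Vᴴ * A * V) i j = sesqFormₗ (v i) (v j) A := by
      rw [Matrix.mul_assoc]
      rfl
    rw [this, diagonal_apply]
    split_ifs with hij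
    · subst hij
      exact hre A hA i
    · exact hv A hA i j hij
  let ε (A : Matrix (Fin n) (Fin n) ℂ) : ℝ :=
    (m + 1) * ∑ i with c i = 0, w i * (sesqFormₗ (v i) (v i) A).re
  have hcode (A) (hA : A ∈ G.E) : (V * T)ᴴ * A * (V * T) = (ε A : ℂ) • 1 := by
    have : (V * T)ᴴ * A * (V * T) = Tᴴ * (Vᴴ * A * V) * T := by
      rw [conjTranspose_mul]
      simp only [Matrix.mul_assoc]
    rw [this, hV A hA]
    ext j j'
    rw [mul_apply]
    simp only [mul_diagonal, conjTranspose_apply, T, of_apply, Matrix.smul_apply, one_apply,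
      smul_eq_mul]
    split_ifs with hj
    · subst hj
      rw [mul_one]
      simp only [ε]
      rw [← hall A hA j, Finset.mul_sum, Finset.sum_filter, Complex.ofReal_sum]
      refine Finset.sum_congr rfl fun i _ => ?_
      split_ifs
      · have h0 : (0 : ℝ) ≤ (m + 1) * w i := mul_nonneg (by positivity) (hw.1 i)
        rw [Complex.star_def, Complex.conj_ofReal, mul_right_comm, ← Complex.ofReal_mul,
          Real.mul_self_sqrt h0, ← Complex.ofReal_mul, mul_assoc]
      · simp
    · rw [mul_zero]
      refine Finset.sum_eq_zero fun i _ => ?_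
      by_cases h : c i = j
      · simp [h, hj]
      · simp [h]
  refine ⟨V * T, ε, fun j => ?_, ?_, hcode⟩
  · have : (V * T).col j = ∑ i, T i j • v i := by
      ext a
      simp [mul_apply, V, mul_comm]
    rw [this]
    exact S.sum_mem fun i _ => S.smul_mem _ (hvS i)
  · have hε : ε 1 = 1 := by
      have h1 (i) : (sesqFormₗ (v i) (v i) 1).re = 1 := by
        rw [sesqFormₗ_apply, one_mulVec, hv1, Complex.one_re]
      have h2 := hall 1 G.one_mem
      have h3 : ∑ a, ∑ i with c i = a, w i = 1 := by
        rw [Finset.sum_fiberwise, hw.2]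
      simp only [h1, mul_one] at h2
      simp only [h2, Finset.sum_const, Finset.card_univ, Fintype.card_fin, nsmul_eq_mul] at h3
      simpa [ε, h1] using h3
    simpa [hε] using hcode 1 G.one_mem

theorem Matrix.finrank_range_mulVecLin_eq_trace {n : ℕ} {Q : Matrix (Fin n) (Fin n) ℂ}
    (hQ : IsIdempotentElem Q) : (Module.finrank ℂ (LinearMap.range Q.mulVecLin) : ℂ) = Q.trace := by
  have h : IsIdempotentElem Q.mulVecLin := by
    rw [IsIdempotentElem, Module.End.mul_eq_comp, ← mulVecLin_mul, hQ.eq]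
  rw [← (LinearMap.IsIdempotentElem.isProj_range _ h).trace]
  exact trace_toLin'_eq Q

theorem slog_succ (q p : ℕ) (hq : 0 < q) : slog q (p + 1) = slog q (p - p / q) + 1 := by
  rw [slog]
  congr 2
  have : (p + 1 + q - 1) / q = p / q + 1 := by
    rw [Nat.add_right_comm, Nat.add_sub_cancel, Nat.add_div_right _ hq]
  rw [this, max_eq_right (Nat.le_add_left 1 _), Nat.add_sub_add_right]

open scoped ComplexOrder in
/-- The range of every projection `Q` of rank `p` can be colored with at most `slog ((dim E)²) p`
codes. -/
theorem QuantumGraph.exists_coloring_of_projection {n : ℕ} (G : QuantumGraph n)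
    (hG : 0 < Module.finrank ℝ G.E) (p : ℕ) (Q : Matrix (Fin n) (Fin n) ℂ)
    (hQ : Q.IsHermitian) (hQ2 : Q * Q = Q) (hp : Q.trace = p) :
    ∃ K : Finset (Matrix (Fin n) (Fin n) ℂ), (∀ P ∈ K, ∃ ε, IsCodeProj G P ε) ∧
      (∀ P ∈ K, Q * P = P) ∧ ∑ P ∈ K, P = Q ∧ K.card ≤ slog (Module.finrank ℝ G.E ^ 2) p := by
  classical
  induction p using Nat.strong_induction_on generalizing Q with
  | _ p ih =>
  have hrank := finrank_range_mulVecLin_eq_trace hQ2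
  rw [hp, Nat.cast_inj] at hrank
  rcases p with _ | p
  · refine ⟨∅, by simp, by simp, ?_, by simp⟩
    rw [Finset.sum_empty, eq_comm, ← trace_conjTranspose_mul_self_eq_zero_iff, hQ.eq, hQ2, hp,
      Nat.cast_zero]
  set q := Module.finrank ℝ G.E ^ 2 with hqdef
  have hq : 0 < q := pow_pos hG 2
  obtain ⟨W, ε, hWQ, hW1, hWε⟩ := G.exists_code (LinearMap.range Q.mulVecLin) (p / q) (by
    rw [hrank, Nat.lt_succ_iff]
    exact Nat.div_mul_le_self p q)
  have hQW : Q * W = W := by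
    ext a j
    obtain ⟨y, hy⟩ := hWQ j
    have : Q *ᵥ W.col j = W.col j := by
      rw [← hy, mulVecLin_apply, mulVec_mulVec, hQ2]
    exact congrFun this a
  set P := W * Wᴴ with hPdef
  have hPh : P.IsHermitian := isHermitian_mul_conjTranspose_self W
  have hP2 : P * P = P := by
    rw [hPdef, Matrix.mul_assoc, ← Matrix.mul_assoc Wᴴ, hW1, Matrix.one_mul]
  have hQP : Q * P = P := by rw [hPdef, ← Matrix.mul_assoc, hQW]
  have hPQ : P * Q = P := by
    simpa [hPh.eq, hQ.eq] using congrArg conjTranspose hQP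
  have hPtr : P.trace = (p / q : ℕ) + 1 := by
    rw [hPdef, trace_mul_comm, hW1, trace_one, Fintype.card_fin]
    push_cast
    rfl
  have hPcode : IsCodeProj G P ε := by
    refine ⟨hPh, hP2, fun A hA => ?_⟩
    have : P * A * P = W * (Wᴴ * A * W) * Wᴴ := by simp only [hPdef, Matrix.mul_assoc]
    rw [this, hWε A hA, Matrix.mul_smul, Matrix.mul_one, Matrix.smul_mul]
  have hdiv : p / q ≤ p := Nat.div_le_self p q
  obtain ⟨K, hK, hKQ, hKsum, hKcard⟩ := ih (p - p / q) (Nat.lt_succ_of_le (Nat.sub_le p _))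
    (Q - P) (hQ.sub hPh)
    (by rw [sub_mul, mul_sub, mul_sub, hQ2, hQP, hPQ, hP2, sub_self, sub_zero])
    (by
      rw [trace_sub, hp, hPtr, Nat.cast_sub hdiv]
      push_cast
      ring)
  have hPK : P ∉ K := fun h => by
    have hP0 := hKQ P h
    rw [sub_mul, hQP, hP2, sub_self] at hP0
    rw [← hP0, trace_zero] at hPtr
    exact Nat.cast_add_one_ne_zero _ hPtr.symm
  refine ⟨insert P K, ?_, ?_, ?_, ?_⟩
  · rw [Finset.forall_mem_insert]
    exact ⟨⟨ε, hPcode⟩, hK⟩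
  · rw [Finset.forall_mem_insert]
    refine ⟨hQP, fun R hR => ?_⟩
    rw [← hKQ R hR, ← Matrix.mul_assoc, mul_sub, hQ2, hQP]
  · rw [Finset.sum_insert hPK, hKsum, add_sub_cancel]
  · rw [Finset.card_insert_of_notMem hPK, slog_succ _ _ hq]
    exact Nat.add_le_add_right hKcard 1

/-- Every quantum graph `G` admits a coloring of cardinality at most
`slog(|G|, (‖G‖+1)²)`, where `‖G‖ = dim E(G) − 1`. -/
theorem exists_coloring_card_le_slog {n : ℕ} (hn : 0 < n) (G : QuantumGraph n) :
    ∃ K : Finset (Matrix (Fin n) (Fin n) ℂ),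
      IsColoring G K ∧ K.card ≤ slog ((Module.finrank ℝ G.E - 1 + 1) ^ 2) n := by
  have : Nonempty (Fin n) := ⟨⟨0, hn⟩⟩
  have : Nontrivial G.E := ⟨⟨1, G.one_mem⟩, 0, fun h => one_ne_zero (congrArg Subtype.val h)⟩
  have hG : 0 < Module.finrank ℝ G.E := Module.finrank_pos
  obtain ⟨K, hK, -, hsum, hcard⟩ := G.exists_coloring_of_projection hG n 1 isHermitian_one
    (Matrix.one_mul 1) (by rw [trace_one, Fintype.card_fin])
  exact ⟨K, ⟨hK, hsum⟩, by rwa [Nat.sub_add_cancel hG]⟩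
end
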